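/- Let A ∈ ℂ^{n×n} be Schur stable, (A,B) controllable, and B, C, D of compatible dimensions. Then μ_∞ ≤ 1 (the H∞ norm of the system (A,B,C,D) is at most 1) if and only if there exists a Hermitian P such that [A*PA−P, A*PB; B*PA, B*PB] + [C*C, C*D; D*C, D*D − I] ⪯ 0. -/

import Mathlib

open Matrix
open scoped ComplexOrder

/-- The squared `H∞` norm: supremum of the output energy over unit-energy disturbances. -/
noncomputable def muInfty {n m p : ℕ} (A : Matrix (Fin n) (Fin n) ℂ)
    (B : Matrix (Fin n) (Fin m) ℂ) (C : Matrix (Fin p) (Fin n) ℂ)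
    (D : Matrix (Fin p) (Fin m) ℂ) : ℝ :=
  sSup {r : ℝ | ∃ (w : ℕ → Fin m → ℂ) (x : ℕ → Fin n → ℂ) (z : ℕ → Fin p → ℂ),
    Summable (fun k => ∑ i, ‖w k i‖ ^ 2) ∧
    (∑' k, ∑ i, ‖w k i‖ ^ 2) = 1 ∧
    x 0 = 0 ∧ (∀ k, x (k + 1) = A.mulVec (x k) + B.mulVec (w k)) ∧
    (∀ k, z k = C.mulVec (x k) + D.mulVec (w k)) ∧
    r = ∑' k, ∑ i, ‖z k i‖ ^ 2}

/-- The controllability matrix `[B, AB, …, A^{n-1}B]`. -/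
noncomputable def ctrbMatrix {n m : ℕ} (A : Matrix (Fin n) (Fin n) ℂ)
    (B : Matrix (Fin n) (Fin m) ℂ) : Matrix (Fin n) (Fin n × Fin m) ℂ :=
  Matrix.of fun i kj => ((A ^ (kj.1 : ℕ)) * B) i kj.2

/-- The squared Euclidean norm of a complex vector. -/
noncomputable def energy {ι : Type*} [Fintype ι] (v : ι → ℂ) : ℝ := ∑ i, ‖v i‖ ^ 2

section Energy

variable {ι : Type*} [Fintype ι]

lemma energy_nonneg (v : ι → ℂ) : 0 ≤ energy v := by
  unfold energy; positivity

@[simp] lemma energy_zero : energy (0 : ι → ℂ) = 0 := by simp [energy]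

lemma energy_eq_zero {v : ι → ℂ} : energy v = 0 ↔ v = 0 := by
  rw [energy, Finset.sum_eq_zero_iff_of_nonneg fun _ _ => by positivity]
  simp [funext_iff]

lemma energy_smul (c : ℂ) (v : ι → ℂ) : energy (c • v) = ‖c‖ ^ 2 * energy v := by
  simp [energy, Finset.mul_sum, mul_pow]

lemma energy_add_add_energy_sub (u v : ι → ℂ) :
    energy (u + v) + energy (u - v) = 2 * (energy u + energy v) := by
  simp only [energy, ← Finset.sum_add_distrib, Finset.mul_sum]
  refine Finset.sum_congr rfl fun i _ => ?_
  have := parallelogram_law_with_norm ℝ (u i) (v i)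
  simp only [Pi.add_apply, Pi.sub_apply]
  linarith

lemma energy_add_le (u v : ι → ℂ) : energy (u + v) ≤ 2 * (energy u + energy v) := by
  linarith [energy_add_add_energy_sub u v, energy_nonneg (u - v)]

lemma energy_convex {a b : ℝ} (ha : 0 ≤ a) (hb : 0 ≤ b) (hab : a + b = 1) (u v : ι → ℂ) :
    energy ((a : ℂ) • u + (b : ℂ) • v) ≤ a * energy u + b * energy v := by
  simp only [energy, Finset.mul_sum, ← Finset.sum_add_distrib]
  refine Finset.sum_le_sum fun i _ => ?_
  have h : ‖(a : ℂ) * u i + (b : ℂ) * v i‖ ≤ a * ‖u i‖ + b * ‖v i‖ := by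
    refine (norm_add_le _ _).trans_eq ?_
    simp [abs_of_nonneg ha, abs_of_nonneg hb]
  have h2 := pow_le_pow_left₀ (norm_nonneg _) h 2
  simp only [Pi.add_apply, Pi.smul_apply, smul_eq_mul]
  obtain rfl : b = 1 - a := by linarith
  nlinarith [mul_nonneg (mul_nonneg ha hb) (sq_nonneg (‖u i‖ - ‖v i‖))]

lemma star_dotProduct_self_eq_energy (v : ι → ℂ) : star v ⬝ᵥ v = (energy v : ℂ) := by
  simp [dotProduct, energy, ← Complex.conj_mul']

lemma energy_le_card_mul_norm_sq (v : ι → ℂ) : energy v ≤ Fintype.card ι * ‖v‖ ^ 2 := by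
  have : ∀ i ∈ Finset.univ, ‖v i‖ ^ 2 ≤ ‖v‖ ^ 2 := fun i _ => by
    gcongr; exact norm_le_pi_norm v i
  simpa [energy] using Finset.sum_le_sum this

lemma norm_sq_le_energy (v : ι → ℂ) : ‖v‖ ^ 2 ≤ energy v := by
  have h : ‖v‖ ≤ √(energy v) := (pi_norm_le_iff_of_nonneg (Real.sqrt_nonneg _)).2 fun i =>
    Real.le_sqrt_of_sq_le
      (Finset.single_le_sum (f := fun i => ‖v i‖ ^ 2) (fun _ _ => by positivity)
        (Finset.mem_univ i))
  calc ‖v‖ ^ 2 ≤ √(energy v) ^ 2 := by gcongr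
    _ = energy v := Real.sq_sqrt (energy_nonneg v)

end Energy

section Stability

open scoped Matrix.Norms.Operator
open Filter Topology

lemma Matrix.exists_norm_mulVec_le {k l : ℕ} (M : Matrix (Fin k) (Fin l) ℂ) :
    ∃ K : ℝ, 0 ≤ K ∧ ∀ v, ‖M *ᵥ v‖ ≤ K * ‖v‖ :=
  ⟨‖M‖, norm_nonneg _, linfty_opNorm_mulVec M⟩

lemma tendsto_norm_pow_of_spectralRadius_lt_one {R : Type*} [NormedRing R] [NormedAlgebra ℂ R]
    [CompleteSpace R] {a : R} (ha : spectralRadius ℂ a < 1) :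
    Tendsto (fun k : ℕ => ‖a ^ k‖) atTop (𝓝 0) := by
  obtain ⟨r, har, hr⟩ := ENNReal.lt_iff_exists_nnreal_btwn.1 ha
  have hr1 : (r : ℝ) < 1 := by exact_mod_cast hr
  have hev :=
    (spectrum.pow_nnnorm_pow_one_div_tendsto_nhds_spectralRadius a).eventually_lt_const har
  refine squeeze_zero' (Eventually.of_forall fun _ => norm_nonneg _) ?_
    (tendsto_pow_atTop_nhds_zero_of_lt_one r.2 hr1)
  filter_upwards [hev, eventually_gt_atTop 0] with k hk hk0
  have hk0' : (k : ℝ) ≠ 0 := by positivity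
  have := ENNReal.rpow_le_rpow hk.le (Nat.cast_nonneg k : (0 : ℝ) ≤ k)
  rw [← ENNReal.rpow_mul, one_div, inv_mul_cancel₀ hk0', ENNReal.rpow_one,
    ENNReal.rpow_natCast] at this
  exact_mod_cast this

lemma Matrix.exists_pow_norm_mulVec_le_half {n : ℕ} {A : Matrix (Fin n) (Fin n) ℂ}
    (hA : spectralRadius ℂ A < 1) :
    ∃ N : ℕ, 0 < N ∧ ∀ v, ‖(A ^ N) *ᵥ v‖ ≤ 1 / 2 * ‖v‖ := by
  have : CompleteSpace (Matrix (Fin n) (Fin n) ℂ) := FiniteDimensional.complete ℂ _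
  obtain ⟨N, hN, hN0⟩ := (((tendsto_norm_pow_of_spectralRadius_lt_one hA).eventually_le_const
    (by norm_num : (0 : ℝ) < 1 / 2)).and (eventually_gt_atTop 0)).exists
  exact ⟨N, hN0, fun v => (linfty_opNorm_mulVec _ v).trans (by gcongr)⟩

lemma Matrix.tendsto_pow_mulVec {n : ℕ} {A : Matrix (Fin n) (Fin n) ℂ}
    (hA : spectralRadius ℂ A < 1) (v : Fin n → ℂ) :
    Tendsto (fun k : ℕ => (A ^ k) *ᵥ v) atTop (𝓝 0) := by
  have : CompleteSpace (Matrix (Fin n) (Fin n) ℂ) := FiniteDimensional.complete ℂ _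
  refine squeeze_zero_norm (fun k => linfty_opNorm_mulVec _ v) ?_
  simpa using (tendsto_norm_pow_of_spectralRadius_lt_one hA).mul_const ‖v‖

end Stability

/-- A positive definite, absolutely homogeneous, convex function satisfying the parallelogram
identity is the quadratic form of a sesquilinear Hermitian form. -/
lemma exists_sesq_of_parallelogram {E : Type*} [AddCommGroup E] [Module ℂ E] (W : E → ℝ)
    (hpos : ∀ x, x ≠ 0 → 0 < W x) (hsmul : ∀ (c : ℂ) x, W (c • x) = ‖c‖ ^ 2 * W x)
    (hconv : ∀ a b : ℝ, 0 ≤ a → 0 ≤ b → a + b = 1 → ∀ x y,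
      W ((a : ℂ) • x + (b : ℂ) • y) ≤ a * W x + b * W y)
    (hpar : ∀ x y, W (x + y) + W (x - y) = 2 * (W x + W y)) :
    ∃ f : E → E → ℂ, (∀ x y, star (f y x) = f x y) ∧
      (∀ x y z, f (x + y) z = f x z + f y z) ∧ (∀ (c : ℂ) x y, f (c • x) y = star c * f x y) ∧
      ∀ x, W x = (f x x).re := by
  have h0 : W 0 = 0 := by simpa using hsmul 0 0
  have hnn : ∀ x, 0 ≤ W x := fun x => by
    rcases eq_or_ne x 0 with rfl | hx
    · exact h0.ge
    · exact (hpos x hx).le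
  let _ : Norm E := ⟨fun x => √(W x)⟩
  have hnorm : ∀ x : E, ‖x‖ = √(W x) := fun _ => rfl
  have core : NormedSpace.Core ℂ E :=
    { norm_nonneg := fun x => Real.sqrt_nonneg _
      norm_smul := fun c x => by
        rw [hnorm, hnorm, hsmul, Real.sqrt_mul (by positivity), Real.sqrt_sq (norm_nonneg _)]
      norm_triangle := fun x y => by
        rcases eq_or_ne x 0 with rfl | hx
        · simp [hnorm, h0]
        rcases eq_or_ne y 0 with rfl | hy
        · simp [hnorm, h0]
        simp only [hnorm]
        set a := √(W x) with ha
        set b := √(W y) with hb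
        have ha0 : 0 < a := Real.sqrt_pos.2 (hpos x hx)
        have hb0 : 0 < b := Real.sqrt_pos.2 (hpos y hy)
        have haC : (a : ℂ) ≠ 0 := by exact_mod_cast ha0.ne'
        have hbC : (b : ℂ) ≠ 0 := by exact_mod_cast hb0.ne'
        have hsC : (a : ℂ) + b ≠ 0 := by exact_mod_cast (add_pos ha0 hb0).ne'
        have hWx : W x = a ^ 2 := (Real.sq_sqrt (hnn x)).symm
        have hWy : W y = b ^ 2 := (Real.sq_sqrt (hnn y)).symm
        have hc := hconv (a / (a + b)) (b / (a + b)) (by positivity) (by positivity)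
          (by field_simp) ((a : ℂ)⁻¹ • x) ((b : ℂ)⁻¹ • y)
        have hxy : ((a / (a + b) : ℝ) : ℂ) • (a : ℂ)⁻¹ • x +
            ((b / (a + b) : ℝ) : ℂ) • (b : ℂ)⁻¹ • y = ((a : ℂ) + b)⁻¹ • (x + y) := by
          rw [smul_smul, smul_smul, smul_add]
          push_cast
          congr 2 <;> field_simp
        have hn : ‖((a : ℂ) + b)⁻¹‖ = (a + b)⁻¹ := by
          rw [← Complex.ofReal_add, ← Complex.ofReal_inv, Complex.norm_real, Real.norm_eq_abs,
            abs_of_pos (by positivity)]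
        rw [hxy, hsmul, hsmul, hsmul, hn, hWx, hWy, norm_inv, norm_inv, Complex.norm_real,
          Complex.norm_real, Real.norm_eq_abs, Real.norm_eq_abs, abs_of_pos ha0, abs_of_pos hb0,
          inv_pow, inv_pow, inv_pow, inv_mul_cancel₀ (by positivity),
          inv_mul_cancel₀ (by positivity), mul_one, mul_one, ← add_div,
          div_self (by positivity), inv_mul_le_one₀ (by positivity)] at hc
        exact Real.sqrt_le_iff.2 ⟨by positivity, hc⟩
      norm_eq_zero_iff := fun x => by
        rw [hnorm, Real.sqrt_eq_zero (hnn x)]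
        exact ⟨fun h => by_contra fun hx => (hpos x hx).ne' h, fun h => h ▸ h0⟩ }
  let _ : NormedAddCommGroup E := NormedAddCommGroup.ofCore core
  let _ : NormedSpace ℂ E := NormedSpace.ofCore core
  have hsq : ∀ x : E, ‖x‖ * ‖x‖ = W x := fun x => Real.mul_self_sqrt (hnn x)
  let _ : InnerProductSpace ℂ E := InnerProductSpace.ofNorm ℂ fun x y => by
    simpa only [hsq] using hpar x y
  refine ⟨fun x y => inner ℂ x y, fun x y => inner_conj_symm x y, inner_add_left,
    fun c x y => inner_smul_left x y c, fun x => ?_⟩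
  rw [← hsq, ← inner_self_eq_norm_mul_norm (𝕜 := ℂ)]
  rfl

lemma exists_isHermitian_of_sesq {ι : Type*} [Fintype ι] [DecidableEq ι]
    (f : (ι → ℂ) → (ι → ℂ) → ℂ) (hsymm : ∀ x y, star (f y x) = f x y)
    (hadd : ∀ x y z, f (x + y) z = f x z + f y z)
    (hsmul : ∀ (c : ℂ) x y, f (c • x) y = star c * f x y) :
    ∃ P : Matrix ι ι ℂ, P.IsHermitian ∧ ∀ x, star x ⬝ᵥ P *ᵥ x = f x x := by
  have hsum : ∀ x y, f x y = ∑ i, star (x i) * f (Pi.single i 1) y := fun x y => by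
    let g : (ι → ℂ) →+ ℂ := AddMonoidHom.mk' (fun x => f x y) fun a b => hadd a b y
    have hx : x = ∑ i, x i • (Pi.single i 1 : ι → ℂ) := by
      ext j; simp [Finset.sum_apply, Pi.single_apply]
    calc f x y = g (∑ i, x i • (Pi.single i 1 : ι → ℂ)) := by rw [← hx]; rfl
      _ = ∑ i, g (x i • (Pi.single i 1 : ι → ℂ)) := map_sum g _ _
      _ = _ := Finset.sum_congr rfl fun i _ => hsmul _ _ _
  refine ⟨Matrix.of fun i j => f (Pi.single i 1) (Pi.single j 1), ?_, fun x => ?_⟩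
  · ext i j
    exact hsymm _ _
  · rw [hsum]
    refine Finset.sum_congr rfl fun i _ => ?_
    rw [← hsymm (Pi.single i 1) x, hsum x, star_sum]
    simp only [Pi.star_apply, mulVec, dotProduct, of_apply, star_mul', star_star, hsymm]
    congr 1
    exact Finset.sum_congr rfl fun j _ => mul_comm _ _

section Supply

variable {n m p : ℕ} (A : Matrix (Fin n) (Fin n) ℂ) (B : Matrix (Fin n) (Fin m) ℂ)
  (C : Matrix (Fin p) (Fin n) ℂ) (D : Matrix (Fin p) (Fin m) ℂ)

/-- The energy gain (output minus input) over the first `N` steps, starting from state `x` under the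
disturbance `w`. -/
noncomputable def energyGain : ℕ → (Fin n → ℂ) → (ℕ → Fin m → ℂ) → ℝ
  | 0, _, _ => 0
  | N + 1, x, w => energy (C *ᵥ x + D *ᵥ w 0) - energy (w 0) +
      energyGain N (A *ᵥ x + B *ᵥ w 0) fun k => w (k + 1)

lemma energyGain_cons (N : ℕ) (x : Fin n → ℂ) (u : Fin m → ℂ) (w : ℕ → Fin m → ℂ) :
    energyGain A B C D (N + 1) x (fun k => Nat.casesOn k u w) =
      energy (C *ᵥ x + D *ᵥ u) - energy u + energyGain A B C D N (A *ᵥ x + B *ᵥ u) w :=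
  rfl

lemma energyGain_eq_sum (N : ℕ) (w : ℕ → Fin m → ℂ) (x : ℕ → Fin n → ℂ)
    (hx : ∀ k, x (k + 1) = A *ᵥ x k + B *ᵥ w k) :
    energyGain A B C D N (x 0) w =
      ∑ k ∈ Finset.range N, (energy (C *ᵥ x k + D *ᵥ w k) - energy (w k)) := by
  induction N generalizing w x with
  | zero => rfl
  | succ N ih =>
    rw [Finset.sum_range_succ', energyGain, ← hx,
      ih (fun k => w (k + 1)) (fun k => x (k + 1)) fun k => hx _, add_comm]

lemma energyGain_congr (N : ℕ) (x : Fin n → ℂ) (w w' : ℕ → Fin m → ℂ)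
    (h : ∀ k < N, w k = w' k) : energyGain A B C D N x w = energyGain A B C D N x w' := by
  induction N generalizing w w' x with
  | zero => rfl
  | succ N ih =>
    rw [energyGain, energyGain, h 0 N.succ_pos,
      ih _ (fun k => w (k + 1)) (fun k => w' (k + 1)) fun k hk => h _ (by omega)]

lemma energyGain_smul (N : ℕ) (c : ℂ) (x : Fin n → ℂ) (w : ℕ → Fin m → ℂ) :
    energyGain A B C D N (c • x) (c • w) = ‖c‖ ^ 2 * energyGain A B C D N x w := by
  induction N generalizing w x with
  | zero => simp [energyGain]
  | succ N ih =>
    have h := ih (A *ᵥ x + B *ᵥ w 0) (fun k => w (k + 1))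
    simp only [energyGain, Pi.smul_apply, mulVec_smul, ← smul_add, energy_smul]
    rw [show (fun k => c • w (k + 1)) = c • fun k => w (k + 1) from rfl, h]
    ring

lemma energyGain_parallelogram (N : ℕ) (x y : Fin n → ℂ) (w v : ℕ → Fin m → ℂ) :
    energyGain A B C D N (x + y) (w + v) + energyGain A B C D N (x - y) (w - v) =
      2 * (energyGain A B C D N x w + energyGain A B C D N y v) := by
  induction N generalizing w v x y with
  | zero => simp [energyGain]
  | succ N ih =>
    have h := ih (A *ᵥ x + B *ᵥ w 0) (A *ᵥ y + B *ᵥ v 0) (fun k => w (k + 1)) (fun k => v (k + 1))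
    have hz := energy_add_add_energy_sub (C *ᵥ x + D *ᵥ w 0) (C *ᵥ y + D *ᵥ v 0)
    have hw := energy_add_add_energy_sub (w 0) (v 0)
    simp only [energyGain, Pi.add_apply, Pi.sub_apply, mulVec_add, mulVec_sub]
    rw [add_add_add_comm (C *ᵥ x), add_add_add_comm (A *ᵥ x), sub_add_sub_comm (C *ᵥ x),
      sub_add_sub_comm (A *ᵥ x)]
    change _ + energyGain A B C D N _ (fun k => w (k + 1) - v (k + 1)) = _ at h
    change energyGain A B C D N _ (fun k => w (k + 1) + v (k + 1)) + _ = _ at h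
    linarith

lemma energyGain_convex (N : ℕ) {a b : ℝ} (ha : 0 ≤ a) (hb : 0 ≤ b) (hab : a + b = 1)
    (x y : Fin n → ℂ) (w : ℕ → Fin m → ℂ) :
    energyGain A B C D N ((a : ℂ) • x + (b : ℂ) • y) w ≤
      a * energyGain A B C D N x w + b * energyGain A B C D N y w := by
  induction N generalizing w x y with
  | zero => simp [energyGain]
  | succ N ih =>
    have habC : (a : ℂ) + b = 1 := by exact_mod_cast hab
    have key : ∀ {k : ℕ} (M : Matrix (Fin k) (Fin n) ℂ) (u : Fin k → ℂ),
        M *ᵥ ((a : ℂ) • x + (b : ℂ) • y) + u =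
          (a : ℂ) • (M *ᵥ x + u) + (b : ℂ) • (M *ᵥ y + u) := fun M u => by
      rw [mulVec_add, mulVec_smul, mulVec_smul, smul_add, smul_add, add_add_add_comm, ← add_smul,
        habC, one_smul]
    have h := ih (A *ᵥ x + B *ᵥ w 0) (A *ᵥ y + B *ᵥ w 0) (fun k => w (k + 1))
    have hz := energy_convex ha hb hab (C *ᵥ x + D *ᵥ w 0) (C *ᵥ y + D *ᵥ w 0)
    simp only [energyGain, key]
    obtain rfl : b = 1 - a := by linarith
    linarith

lemma exists_energyGain_ge_of_le {N M : ℕ} (h : N ≤ M) (x : Fin n → ℂ) (w : ℕ → Fin m → ℂ) :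
    ∃ w', energyGain A B C D N x w ≤ energyGain A B C D M x w' := by
  induction N generalizing M w x with
  | zero =>
    refine ⟨0, ?_⟩
    clear h
    induction M generalizing x with
    | zero => exact le_rfl
    | succ M ih =>
      simp only [energyGain, Pi.zero_apply, energy_zero]
      have := ih (A *ᵥ x + B *ᵥ 0)
      simp only [energyGain] at this
      have h2 := energy_nonneg (C *ᵥ x + D *ᵥ 0)
      change _ ≤ _ + energyGain A B C D M _ 0
      linarith
  | succ N ih =>
    obtain ⟨M, rfl⟩ : ∃ K, M = K + 1 := ⟨M - 1, by omega⟩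
    obtain ⟨w', hw'⟩ := ih (by omega : N ≤ M) (A *ᵥ x + B *ᵥ w 0) (fun k => w (k + 1))
    refine ⟨fun k => Nat.casesOn k (w 0) w', ?_⟩
    rw [energyGain_cons, energyGain]
    gcongr

variable {A B C D}

/-- When no energy can be extracted from rest, only boundedly much can be extracted from any state:
the states with this property form an `A`-invariant subspace containing the range of `B`. -/
lemma bddAbove_energyGain (hctrb : (ctrbMatrix A B).rank = n)
    (h0 : ∀ N w, energyGain A B C D N 0 w ≤ 0) (x : Fin n → ℂ) :
    BddAbove (Set.range fun q : ℕ × (ℕ → Fin m → ℂ) => energyGain A B C D q.1 x q.2) := by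
  let R : Submodule ℂ (Fin n → ℂ) :=
    { carrier := {x | ∃ c, ∀ N w, energyGain A B C D N x w ≤ c}
      zero_mem' := ⟨0, h0⟩
      smul_mem' := fun a x ⟨c, hc⟩ => by
        rcases eq_or_ne a 0 with rfl | ha
        · exact ⟨0, by simpa using h0⟩
        refine ⟨‖a‖ ^ 2 * c, fun N w => ?_⟩
        rw [← smul_inv_smul₀ ha w, energyGain_smul]
        gcongr
        exact hc _ _
      add_mem' := fun {x y} ⟨c, hc⟩ ⟨d, hd⟩ => by
        refine ⟨4 * (1 / 2 * c + 1 / 2 * d), fun N w => ?_⟩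
        have h := energyGain_convex A B C D N (by norm_num : (0 : ℝ) ≤ 1 / 2)
          (by norm_num : (0 : ℝ) ≤ 1 / 2) (by norm_num) x y ((2 : ℂ)⁻¹ • w)
        have h2 := energyGain_smul A B C D N (2 : ℂ)⁻¹ (x + y) w
        have hxy : ((1 / 2 : ℝ) : ℂ) • x + ((1 / 2 : ℝ) : ℂ) • y = (2 : ℂ)⁻¹ • (x + y) := by
          rw [smul_add]; norm_num
        rw [hxy, h2] at h
        have := hc N ((2 : ℂ)⁻¹ • w)
        have := hd N ((2 : ℂ)⁻¹ • w)
        norm_num at h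
        linarith }
  have hstep : ∀ x ∈ R, ∀ u, A *ᵥ x + B *ᵥ u ∈ R := fun x ⟨c, hc⟩ u => by
    refine ⟨c - (energy (C *ᵥ x + D *ᵥ u) - energy u), fun N w => ?_⟩
    have h := hc (N + 1) fun k => Nat.casesOn k u w
    rw [energyGain_cons] at h
    linarith
  have hpow : ∀ k u, (A ^ k) *ᵥ B *ᵥ u ∈ R := fun k u => by
    induction k with
    | zero => simpa using hstep 0 R.zero_mem u
    | succ k ih => simpa [pow_succ', ← mulVec_mulVec] using hstep _ ih 0
  have hcols : Set.range (ctrbMatrix A B).col ⊆ R := by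
    rintro _ ⟨⟨k, j⟩, rfl⟩
    convert! hpow k (Pi.single j 1) using 1
    rw [mulVec_mulVec, mulVec_single_one]
    rfl
  have htop : Submodule.span ℂ (Set.range (ctrbMatrix A B).col) = ⊤ :=
    Submodule.eq_top_of_finrank_eq (by
      rw [← rank_eq_finrank_span_cols, hctrb, Module.finrank_fin_fun])
  obtain ⟨c, hc⟩ : x ∈ R := Submodule.span_le.2 hcols (htop ▸ Submodule.mem_top)
  exact ⟨c, by rintro _ ⟨q, rfl⟩; exact hc _ _⟩

/-- The available storage is a quadratic form satisfying the dissipation inequality. -/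
lemma exists_isHermitian_storage (hctrb : (ctrbMatrix A B).rank = n)
    (h0 : ∀ N w, energyGain A B C D N 0 w ≤ 0) :
    ∃ P : Matrix (Fin n) (Fin n) ℂ, P.IsHermitian ∧ ∀ x w,
      (star (A *ᵥ x + B *ᵥ w) ⬝ᵥ P *ᵥ (A *ᵥ x + B *ᵥ w)).re + energy (C *ᵥ x + D *ᵥ w) ≤
        (star x ⬝ᵥ P *ᵥ x).re + energy w := by
  let V : (Fin n → ℂ) → ℝ := fun x =>
    ⨆ q : ℕ × (ℕ → Fin m → ℂ), energyGain A B C D q.1 x q.2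
  have hle : ∀ N x w, energyGain A B C D N x w ≤ V x := fun N x w =>
    le_ciSup (bddAbove_energyGain hctrb h0 x) (N, w)
  have hV0 : ∀ x, 0 ≤ V x := fun x => hle 0 x 0
  have hsmul_le : ∀ (c : ℂ) x, V (c • x) ≤ ‖c‖ ^ 2 * V x := fun c x => by
    refine ciSup_le fun ⟨N, w⟩ => ?_
    rcases eq_or_ne c 0 with rfl | hc
    · simpa using h0 N w
    · rw [← smul_inv_smul₀ hc w, energyGain_smul]
      gcongr
      exact hle _ _ _
  have hsmul : ∀ (c : ℂ) x, V (c • x) = ‖c‖ ^ 2 * V x := fun c x => by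
    refine (hsmul_le c x).antisymm ?_
    rcases eq_or_ne c 0 with rfl | hc
    · simpa using hV0 0
    · have h := hsmul_le c⁻¹ (c • x)
      rwa [inv_smul_smul₀ hc, norm_inv, inv_pow, ← div_eq_inv_mul,
        le_div_iff₀' (by positivity)] at h
  have hconv : ∀ a b : ℝ, 0 ≤ a → 0 ≤ b → a + b = 1 → ∀ x y,
      V ((a : ℂ) • x + (b : ℂ) • y) ≤ a * V x + b * V y := fun a b ha hb hab x y =>
    ciSup_le fun ⟨N, w⟩ => (energyGain_convex A B C D N ha hb hab x y w).trans (by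
      gcongr <;> exact hle _ _ _)
  have hpar_le : ∀ x y, 2 * (V x + V y) ≤ V (x + y) + V (x - y) := fun x y => by
    suffices h : V x + V y ≤ (V (x + y) + V (x - y)) / 2 by linarith
    refine ciSup_add_ciSup_le fun ⟨N, w⟩ ⟨M, v⟩ => ?_
    obtain ⟨w', hw⟩ := exists_energyGain_ge_of_le A B C D (le_max_left N M) x w
    obtain ⟨v', hv⟩ := exists_energyGain_ge_of_le A B C D (le_max_right N M) y v
    have h := energyGain_parallelogram A B C D (max N M) x y w' v'
    have := hle (max N M) (x + y) (w' + v')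
    have := hle (max N M) (x - y) (w' - v')
    dsimp only
    linarith
  have hpar : ∀ x y, V (x + y) + V (x - y) = 2 * (V x + V y) := fun x y => by
    refine le_antisymm ?_ (hpar_le x y)
    have h := hpar_le (x + y) (x - y)
    have hx : x + y + (x - y) = (2 : ℂ) • x := by module
    have hy : x + y - (x - y) = (2 : ℂ) • y := by module
    rw [hx, hy, hsmul, hsmul] at h
    norm_num at h
    linarith
  obtain ⟨f, hf1, hf2, hf3, hf4⟩ := exists_sesq_of_parallelogram (fun x => V x + energy x)
    (fun x hx => add_pos_of_nonneg_of_pos (hV0 x)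
      ((energy_nonneg x).lt_of_ne' fun h => hx (energy_eq_zero.1 h)))
    (fun c x => by simp only [hsmul, energy_smul]; ring)
    (fun a b ha hb hab x y => by
      have := hconv a b ha hb hab x y
      have := energy_convex ha hb hab x y
      linarith)
    (fun x y => by
      have := hpar x y
      have := energy_add_add_energy_sub x y
      linarith)
  obtain ⟨Q, hQ, hQf⟩ := exists_isHermitian_of_sesq f hf1 hf2 hf3
  have hVP : ∀ x, (star x ⬝ᵥ (Q - 1) *ᵥ x).re = V x := fun x => by
    rw [sub_mulVec, one_mulVec, dotProduct_sub, star_dotProduct_self_eq_energy, Complex.sub_re,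
      hQf, ← hf4, Complex.ofReal_re]
    ring
  refine ⟨Q - 1, hQ.sub isHermitian_one, fun x u => ?_⟩
  rw [hVP, hVP]
  suffices h : V (A *ᵥ x + B *ᵥ u) ≤ V x + energy u - energy (C *ᵥ x + D *ᵥ u) by linarith
  refine ciSup_le fun ⟨N, w⟩ => ?_
  have h := hle (N + 1) x fun k => Nat.casesOn k u w
  rw [energyGain_cons] at h
  dsimp only
  linarith

/-- A storage function bounds the output energy by the input energy. -/
lemma sum_energy_output_le {V : (Fin n → ℂ) → ℝ} {γ : ℝ} (hV0 : V 0 = 0) (hV : ∀ x, 0 ≤ V x)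
    (hdiss : ∀ x w, V (A *ᵥ x + B *ᵥ w) + energy (C *ᵥ x + D *ᵥ w) ≤ V x + γ * energy w)
    {w : ℕ → Fin m → ℂ} {x : ℕ → Fin n → ℂ} (hx0 : x 0 = 0)
    (hx : ∀ k, x (k + 1) = A *ᵥ x k + B *ᵥ w k) (N : ℕ) :
    ∑ k ∈ Finset.range N, energy (C *ᵥ x k + D *ᵥ w k) ≤
      γ * ∑ k ∈ Finset.range N, energy (w k) := by
  suffices h : V (x N) + ∑ k ∈ Finset.range N, energy (C *ᵥ x k + D *ᵥ w k) ≤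
      γ * ∑ k ∈ Finset.range N, energy (w k) by linarith [hV (x N)]
  induction N with
  | zero => simp [hx0, hV0]
  | succ N ih =>
    rw [Finset.sum_range_succ, Finset.sum_range_succ, hx]
    linarith [hdiss (x N) (w N)]

/-- A Schur stable system admits a storage function, with some finite gain `γ`. -/
lemma exists_storage_of_stable (hA : spectralRadius ℂ A < 1) (B : Matrix (Fin n) (Fin m) ℂ)
    (C : Matrix (Fin p) (Fin n) ℂ) (D : Matrix (Fin p) (Fin m) ℂ) :
    ∃ (γ : ℝ) (V : (Fin n → ℂ) → ℝ), 0 ≤ γ ∧ V 0 = 0 ∧ (∀ x, 0 ≤ V x) ∧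
      ∀ x w, V (A *ᵥ x + B *ᵥ w) + energy (C *ᵥ x + D *ᵥ w) ≤ V x + γ * energy w := by
  obtain ⟨N, hN, hhalf⟩ := exists_pow_norm_mulVec_le_half hA
  choose K hK0 hK using fun k => (A ^ k).exists_norm_mulVec_le
  obtain ⟨kB, hkB0, hkB⟩ := B.exists_norm_mulVec_le
  obtain ⟨kC, hkC0, hkC⟩ := C.exists_norm_mulVec_le
  obtain ⟨kD, hkD0, hkD⟩ := D.exists_norm_mulVec_le
  let U : (Fin n → ℂ) → ℝ := fun x => ∑ k ∈ Finset.range N, ‖(A ^ k) *ᵥ x‖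
  let L : ℝ := 1 + ∑ k ∈ Finset.range N, K k
  have hL : 1 ≤ L := le_add_of_nonneg_right (Finset.sum_nonneg fun k _ => hK0 k)
  have hU0 : ∀ x, 0 ≤ U x := fun x => Finset.sum_nonneg fun _ _ => norm_nonneg _
  have hUle : ∀ x, U x ≤ L * ‖x‖ := fun x => by
    have : U x ≤ ∑ k ∈ Finset.range N, K k * ‖x‖ := Finset.sum_le_sum fun k _ => hK k x
    rw [← Finset.sum_mul] at this
    nlinarith [norm_nonneg x]
  have hUge : ∀ x, ‖x‖ ≤ U x := fun x => by
    simpa using Finset.single_le_sum (f := fun k => ‖(A ^ k) *ᵥ x‖)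
      (fun _ _ => norm_nonneg _) (Finset.mem_range.2 hN)
  have hUadd : ∀ x y, U (x + y) ≤ U x + U y := fun x y => by
    simp only [U, mulVec_add, ← Finset.sum_add_distrib]
    exact Finset.sum_le_sum fun _ _ => norm_add_le _ _
  have hUA : ∀ x, U (A *ᵥ x) ≤ U x - 1 / 2 * ‖x‖ := fun x => by
    have h1 := Finset.sum_range_succ (fun k => ‖(A ^ k) *ᵥ x‖) N
    have h2 := Finset.sum_range_succ' (fun k => ‖(A ^ k) *ᵥ x‖) N
    have h3 : U (A *ᵥ x) = ∑ k ∈ Finset.range N, ‖(A ^ (k + 1)) *ᵥ x‖ := by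
      simp only [U, pow_succ, ← mulVec_mulVec]
    have h4 : U x = ∑ k ∈ Finset.range N, ‖(A ^ k) *ᵥ x‖ := rfl
    simp only [pow_zero, one_mulVec] at h2
    linarith [hhalf x]
  let δ : ℝ := 1 / (2 * L)
  have hδ0 : 0 < δ := by positivity
  have hδ1 : δ ≤ 1 := by
    rw [div_le_one (by positivity)]; linarith
  have hUdecay : ∀ x w, U (A *ᵥ x + B *ᵥ w) ≤ (1 - δ) * U x + L * kB * ‖w‖ := fun x w => by
    have h1 := hUadd (A *ᵥ x) (B *ᵥ w)
    have h2 := hUle (B *ᵥ w)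
    have h3 : L * ‖B *ᵥ w‖ ≤ L * (kB * ‖w‖) := by gcongr; exact hkB w
    have h4 : δ * U x ≤ 1 / 2 * ‖x‖ := by
      calc δ * U x ≤ δ * (L * ‖x‖) := by gcongr; exact hUle x
        _ = 1 / 2 * ‖x‖ := by simp only [δ]; field_simp
    linarith [hUA x]
  let β : ℝ := L * kB
  let c₁ : ℝ := 2 * (p * kC ^ 2)
  let c₂ : ℝ := 2 * (p * kD ^ 2)
  have hU2 : ∀ x w, U (A *ᵥ x + B *ᵥ w) ^ 2 ≤ (1 - δ) * U x ^ 2 + β ^ 2 / δ * ‖w‖ ^ 2 :=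
    fun x w => by
      have h1 := pow_le_pow_left₀ (hU0 _) (hUdecay x w) 2
      have h2 : (1 - δ) * U x ^ 2 + β ^ 2 / δ * ‖w‖ ^ 2 - ((1 - δ) * U x + β * ‖w‖) ^ 2 =
          (1 - δ) / δ * (δ * U x - β * ‖w‖) ^ 2 := by
        field_simp; ring
      have h3 : 0 ≤ (1 - δ) / δ * (δ * U x - β * ‖w‖) ^ 2 :=
        mul_nonneg (div_nonneg (by linarith) hδ0.le) (sq_nonneg _)
      linarith
  have hout : ∀ x w, energy (C *ᵥ x + D *ᵥ w) ≤ c₁ * U x ^ 2 + c₂ * ‖w‖ ^ 2 := fun x w => by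
    have h1 : energy (C *ᵥ x) ≤ p * (kC * U x) ^ 2 := by
      refine (energy_le_card_mul_norm_sq _).trans ?_
      rw [Fintype.card_fin]
      gcongr
      exact (hkC x).trans (by gcongr; exact hUge x)
    have h2 : energy (D *ᵥ w) ≤ p * (kD * ‖w‖) ^ 2 := by
      refine (energy_le_card_mul_norm_sq _).trans ?_
      rw [Fintype.card_fin]
      gcongr
      exact hkD w
    have h3 := energy_add_le (C *ᵥ x) (D *ᵥ w)
    simp only [c₁, c₂]
    linarith
  refine ⟨c₁ / δ * (β ^ 2 / δ) + c₂, fun x => c₁ / δ * U x ^ 2, by positivity, ?_,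
    fun x => by positivity, fun x w => ?_⟩
  · simp [U]
  · have h1 : c₁ / δ * U (A *ᵥ x + B *ᵥ w) ^ 2 ≤
        c₁ / δ * ((1 - δ) * U x ^ 2 + β ^ 2 / δ * ‖w‖ ^ 2) := by
      gcongr; exact hU2 x w
    have h2 : c₁ / δ * ((1 - δ) * U x ^ 2 + β ^ 2 / δ * ‖w‖ ^ 2) =
        c₁ / δ * U x ^ 2 - c₁ * U x ^ 2 + c₁ / δ * (β ^ 2 / δ) * ‖w‖ ^ 2 := by
      field_simp
    have h3 : (c₁ / δ * (β ^ 2 / δ) + c₂) * ‖w‖ ^ 2 ≤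
        (c₁ / δ * (β ^ 2 / δ) + c₂) * energy w := by
      gcongr; exact norm_sq_le_energy w
    dsimp only
    linarith [hout x w]

end Supply

section KYP

variable {n m p : ℕ} {A : Matrix (Fin n) (Fin n) ℂ} {B : Matrix (Fin n) (Fin m) ℂ}
  {C : Matrix (Fin p) (Fin n) ℂ} {D : Matrix (Fin p) (Fin m) ℂ}

/-- The quadratic form of the KYP matrix is the dissipation defect. -/
lemma star_dotProduct_kyp_mulVec (P : Matrix (Fin n) (Fin n) ℂ) (x : Fin n → ℂ)
    (w : Fin m → ℂ) :
    star (Sum.elim x w) ⬝ᵥ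
        (-(fromBlocks (Aᴴ * P * A - P) (Aᴴ * P * B) (Bᴴ * P * A) (Bᴴ * P * B) +
            fromBlocks (Cᴴ * C) (Cᴴ * D) (Dᴴ * C)
              (Dᴴ * D - (1 : Matrix (Fin m) (Fin m) ℂ)))) *ᵥ Sum.elim x w =
      star x ⬝ᵥ P *ᵥ x + energy w -
        (star (A *ᵥ x + B *ᵥ w) ⬝ᵥ P *ᵥ (A *ᵥ x + B *ᵥ w) + energy (C *ᵥ x + D *ᵥ w)) := by
  have hstar : star (Sum.elim x w) = Sum.elim (star x) (star w) := by
    ext (i | i) <;> rfl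
  have hadj : ∀ {k l : ℕ} (M : Matrix (Fin k) (Fin l) ℂ) (u : Fin l → ℂ) (v : Fin k → ℂ),
      star u ⬝ᵥ Mᴴ *ᵥ v = star (M *ᵥ u) ⬝ᵥ v := fun M u v => by
    rw [dotProduct_mulVec, star_mulVec]
  rw [hstar, neg_mulVec, dotProduct_neg, add_mulVec, fromBlocks_mulVec, fromBlocks_mulVec,
    dotProduct_add, sumElim_dotProduct_sumElim, sumElim_dotProduct_sumElim,
    ← star_dotProduct_self_eq_energy, ← star_dotProduct_self_eq_energy]
  simp only [Sum.elim_comp_inl, Sum.elim_comp_inr, sub_mulVec, mul_assoc, ← mulVec_mulVec,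
    one_mulVec, dotProduct_add, dotProduct_sub, hadj, star_add, add_dotProduct, mulVec_add]
  ring

lemma isHermitian_kyp {P : Matrix (Fin n) (Fin n) ℂ} (hP : P.IsHermitian) :
    (-(fromBlocks (Aᴴ * P * A - P) (Aᴴ * P * B) (Bᴴ * P * A) (Bᴴ * P * B) +
      fromBlocks (Cᴴ * C) (Cᴴ * D) (Dᴴ * C)
        (Dᴴ * D - (1 : Matrix (Fin m) (Fin m) ℂ)))).IsHermitian := by
  refine (IsHermitian.add (IsHermitian.fromBlocks ?_ ?_ ?_) (IsHermitian.fromBlocks ?_ ?_ ?_)).neg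
  · exact (isHermitian_conjTranspose_mul_mul A hP).sub hP
  · simp [conjTranspose_mul, hP.eq, Matrix.mul_assoc]
  · exact isHermitian_conjTranspose_mul_mul B hP
  · exact isHermitian_conjTranspose_mul_self C
  · simp [conjTranspose_mul]
  · exact (isHermitian_conjTranspose_mul_self D).sub isHermitian_one

lemma Matrix.IsHermitian.ofReal_re_star_dotProduct_mulVec {P : Matrix (Fin n) (Fin n) ℂ}
    (hP : P.IsHermitian) (x : Fin n → ℂ) :
    ((star x ⬝ᵥ P *ᵥ x).re : ℂ) = star x ⬝ᵥ P *ᵥ x :=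
  Complex.ext rfl (by simpa using (hP.im_star_dotProduct_mulVec_self x).symm)

/-- The KYP inequality is the dissipation inequality for the storage function `x ↦ x⋆Px`. -/
lemma posSemidef_kyp_iff {P : Matrix (Fin n) (Fin n) ℂ} (hP : P.IsHermitian) :
    (-(fromBlocks (Aᴴ * P * A - P) (Aᴴ * P * B) (Bᴴ * P * A) (Bᴴ * P * B) +
      fromBlocks (Cᴴ * C) (Cᴴ * D) (Dᴴ * C)
        (Dᴴ * D - (1 : Matrix (Fin m) (Fin m) ℂ)))).PosSemidef ↔
    ∀ x w, (star (A *ᵥ x + B *ᵥ w) ⬝ᵥ P *ᵥ (A *ᵥ x + B *ᵥ w)).re + energy (C *ᵥ x + D *ᵥ w) ≤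
        (star x ⬝ᵥ P *ᵥ x).re + energy w := by
  rw [posSemidef_iff_dotProduct_mulVec, and_iff_right (isHermitian_kyp hP)]
  have key : ∀ x w, 0 ≤ star (Sum.elim x w) ⬝ᵥ
        (-(fromBlocks (Aᴴ * P * A - P) (Aᴴ * P * B) (Bᴴ * P * A) (Bᴴ * P * B) +
            fromBlocks (Cᴴ * C) (Cᴴ * D) (Dᴴ * C)
              (Dᴴ * D - (1 : Matrix (Fin m) (Fin m) ℂ)))) *ᵥ Sum.elim x w ↔
      (star (A *ᵥ x + B *ᵥ w) ⬝ᵥ P *ᵥ (A *ᵥ x + B *ᵥ w)).re + energy (C *ᵥ x + D *ᵥ w) ≤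
        (star x ⬝ᵥ P *ᵥ x).re + energy w := fun x w => by
    rw [star_dotProduct_kyp_mulVec, ← hP.ofReal_re_star_dotProduct_mulVec x,
      ← hP.ofReal_re_star_dotProduct_mulVec (A *ᵥ x + B *ᵥ w), sub_nonneg]
    norm_cast
  exact ⟨fun h x w => (key x w).1 (h _), fun h v => by
    simpa using (key (v ∘ Sum.inl) (v ∘ Sum.inr)).2 (h _ _)⟩

/-- A solution of the dissipation inequality for a stable system is nonnegative. -/
lemma storage_nonneg_of_stable (hA : spectralRadius ℂ A < 1) {V : (Fin n → ℂ) → ℝ}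
    (hcont : Continuous V) (hV0 : V 0 = 0) (hV : ∀ x, V (A *ᵥ x) ≤ V x) (x : Fin n → ℂ) :
    0 ≤ V x := by
  have hpow : ∀ k : ℕ, V ((A ^ k) *ᵥ x) ≤ V x := fun k => by
    induction k with
    | zero => simp
    | succ k ih =>
      rw [pow_succ', ← mulVec_mulVec]
      exact (hV _).trans ih
  have hlim := (hcont.tendsto 0).comp (tendsto_pow_mulVec hA x)
  rw [hV0] at hlim
  exact le_of_tendsto' hlim hpow

lemma exists_trajectory (A : Matrix (Fin n) (Fin n) ℂ) (B : Matrix (Fin n) (Fin m) ℂ)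
    (w : ℕ → Fin m → ℂ) :
    ∃ x : ℕ → Fin n → ℂ, x 0 = 0 ∧ ∀ k, x (k + 1) = A *ᵥ x k + B *ᵥ w k :=
  ⟨fun k => Nat.rec 0 (fun k x => A *ᵥ x + B *ᵥ w k) k, rfl, fun _ => rfl⟩

lemma energyGain_zero_nonpos (hA : spectralRadius ℂ A < 1) (hμ : muInfty A B C D ≤ 1) (N : ℕ)
    (w : ℕ → Fin m → ℂ) : energyGain A B C D N 0 w ≤ 0 := by
  obtain ⟨γ, V, hγ, hV0, hV, hdiss⟩ := exists_storage_of_stable hA B C D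
  have hbound : ∀ (w : ℕ → Fin m → ℂ) (x : ℕ → Fin n → ℂ), Summable (fun k => energy (w k)) →
      ∑' k, energy (w k) = 1 → x 0 = 0 → (∀ k, x (k + 1) = A *ᵥ x k + B *ᵥ w k) →
      ∀ N, ∑ k ∈ Finset.range N, energy (C *ᵥ x k + D *ᵥ w k) ≤ γ :=
    fun w x hw hw1 hx0 hx N => by
      have h := sum_energy_output_le hV0 hV hdiss hx0 hx N
      have h1 := hw.sum_le_tsum (Finset.range N) fun k _ => energy_nonneg (w k)
      nlinarith
  have hunit : ∀ (w : ℕ → Fin m → ℂ) (x : ℕ → Fin n → ℂ), Summable (fun k => energy (w k)) →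
      ∑' k, energy (w k) = 1 → x 0 = 0 → (∀ k, x (k + 1) = A *ᵥ x k + B *ᵥ w k) →
      ∀ N, ∑ k ∈ Finset.range N, energy (C *ᵥ x k + D *ᵥ w k) ≤ 1 :=
    fun w x hw hw1 hx0 hx N => by
      refine (Summable.sum_le_tsum _ (fun k _ => energy_nonneg _)
        (summable_of_sum_range_le (fun _ => energy_nonneg _)
          (hbound w x hw hw1 hx0 hx))).trans (le_trans ?_ hμ)
      refine le_csSup ⟨γ, ?_⟩ ⟨w, x, _, hw, hw1, hx0, hx, fun _ => rfl, rfl⟩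
      rintro _ ⟨w, x, z, hw, hw1, hx0, hx, hz, rfl⟩
      refine Real.tsum_le_of_sum_range_le (fun _ => by positivity) fun N => ?_
      simp only [hz]
      exact hbound w x hw hw1 hx0 hx N
  let w' : ℕ → Fin m → ℂ := fun k => if k < N then w k else 0
  let E : ℝ := ∑ k ∈ Finset.range N, energy (w' k)
  have hout : ∀ k ∉ Finset.range N, w' k = 0 := fun k hk => if_neg (by simpa using hk)
  have hE : 0 ≤ E := Finset.sum_nonneg fun _ _ => energy_nonneg _
  rw [energyGain_congr A B C D N 0 w w' fun k hk => (if_pos hk).symm]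
  rcases hE.eq_or_lt with hE0 | hE0
  · have hw0 : w' = 0 := funext fun k => by
      by_cases hk : k ∈ Finset.range N
      · exact energy_eq_zero.1
          ((Finset.sum_eq_zero_iff_of_nonneg fun _ _ => energy_nonneg _).1 hE0.symm k hk)
      · exact hout k hk
    rw [hw0]
    simpa using (energyGain_smul A B C D N 0 0 0).le
  · let c : ℂ := ((√E)⁻¹ : ℝ)
    have hc : ‖c‖ ^ 2 = E⁻¹ := by
      rw [Complex.norm_real, norm_inv, Real.norm_eq_abs, inv_pow, sq_abs, Real.sq_sqrt hE]
    have hsum : HasSum (fun k => energy ((c • w') k)) 1 := by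
      have h : ∑ k ∈ Finset.range N, energy ((c • w') k) = 1 := by
        simp only [Pi.smul_apply, energy_smul, hc]
        rw [← Finset.mul_sum]
        exact inv_mul_cancel₀ hE0.ne'
      rw [← h]
      exact hasSum_sum_of_ne_finset_zero fun k hk => by simp [hout k hk]
    obtain ⟨x, hx0, hx⟩ := exists_trajectory A B (c • w')
    have h1 := hunit (c • w') x hsum.summable hsum.tsum_eq hx0 hx N
    have h2 := energyGain_eq_sum A B C D N (c • w') x hx
    have h3 := energyGain_smul A B C D N c 0 w'
    rw [smul_zero, ← hx0, h2, hx0, hc, Finset.sum_sub_distrib] at h3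
    have h4 : ∑ k ∈ Finset.range N, energy ((c • w') k) = 1 := by
      rw [← hsum.tsum_eq]
      exact (tsum_eq_sum fun k hk => by simp [hout k hk]).symm
    have h5 : E⁻¹ * energyGain A B C D N 0 w' ≤ 0 := by linarith
    exact nonpos_of_mul_nonpos_right h5 (inv_pos.2 hE0)

lemma muInfty_le_one_of_storage {V : (Fin n → ℂ) → ℝ} (hV0 : V 0 = 0) (hV : ∀ x, 0 ≤ V x)
    (hdiss : ∀ x w, V (A *ᵥ x + B *ᵥ w) + energy (C *ᵥ x + D *ᵥ w) ≤ V x + energy w) :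
    muInfty A B C D ≤ 1 := by
  refine Real.sSup_le ?_ zero_le_one
  rintro _ ⟨w, x, z, hw, hw1, hx0, hx, hz, rfl⟩
  refine Real.tsum_le_of_sum_range_le (fun _ => by positivity) fun N => ?_
  simp only [hz]
  refine (sum_energy_output_le (γ := 1) hV0 hV (by simpa using hdiss) hx0 hx N).trans ?_
  rw [one_mul, ← hw1]
  exact hw.sum_le_tsum _ fun k _ => energy_nonneg (w k)

end KYP

/-- the non-strict discrete-time KYP lemma, under controllability of
`(A, B)`: `μ∞ ≤ 1` iff the KYP LMI has a Hermitian solution with non-strict inequality. -/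
theorem kyp_lemma_nonstrict {n m p : ℕ}
    (A : Matrix (Fin n) (Fin n) ℂ) (hA : spectralRadius ℂ A < 1)
    (B : Matrix (Fin n) (Fin m) ℂ) (C : Matrix (Fin p) (Fin n) ℂ)
    (D : Matrix (Fin p) (Fin m) ℂ)
    (hctrb : (ctrbMatrix A B).rank = n) :
    muInfty A B C D ≤ 1 ↔
      ∃ P : Matrix (Fin n) (Fin n) ℂ, P.IsHermitian ∧
        (-(fromBlocks (Aᴴ * P * A - P) (Aᴴ * P * B) (Bᴴ * P * A) (Bᴴ * P * B) +
            fromBlocks (Cᴴ * C) (Cᴴ * D) (Dᴴ * C)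
              (Dᴴ * D - (1 : Matrix (Fin m) (Fin m) ℂ)))).PosSemidef := by
  constructor
  · intro hμ
    obtain ⟨P, hP, hdiss⟩ := exists_isHermitian_storage hctrb (energyGain_zero_nonpos hA hμ)
    exact ⟨P, hP, (posSemidef_kyp_iff hP).2 hdiss⟩
  · rintro ⟨P, hP, hpsd⟩
    have hdiss := (posSemidef_kyp_iff hP).1 hpsd
    refine muInfty_le_one_of_storage (V := fun x => (star x ⬝ᵥ P *ᵥ x).re) (by simp)
      (storage_nonneg_of_stable hA ?_ (by simp) fun x => ?_) hdiss
    · simp only [dotProduct, mulVec, Pi.star_apply]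
      fun_prop
    · have h := hdiss x 0
      have := energy_nonneg (C *ᵥ x + D *ᵥ 0)
      simp only [mulVec_zero, add_zero, energy_zero] at h this ⊢
      linarith
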